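/- arXiv:1803.11436 — 3 statements merged into one kernel-verified Lean document; each statement's English description precedes it below -/
import Mathlib

section
/- Let n ≥ 5. The number of triangulations of the convex n-gon having exactly two ears (equivalently, whose dual tree is a path) is exactly n · 2^{n−5}. -/
/-!
Count pairs `(τ, i)` where `τ` is a two-ear triangulation and `ear i ∈ τ`: each `τ` occurs twice,
so it suffices that every `i` carries exactly `2 ^ (n - 4)` triangulations (`card_fiber`).

No diagonal of such a `τ` ends at the vertex `i`, because it would cross `ear i`.  Labelling the
other vertices `i + 1, …, i + (n - 1)` turns `τ` into a set of `n - 3` pairwise noncrossing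
intervals `(x, y)` with `1 ≤ x`, `x + 2 ≤ y ≤ n - 1`.  The ear at `i` becomes the full interval
`(1, n - 1)`, and the other ears become the intervals of length two, so there is exactly one of
those.

Such interval systems are counted by induction on the length of the ambient interval.  A
noncrossing system inside `[a, b]` has at most `b - a - 1` members (`card_lt_of_noncrossing`).  A
system attaining the bound contains `(a, b)`, and each of its members contains a member of length
two (`exists_short`).  Hence, if there is only one member of length two, the members other than
`(a, b)` cannot include both one starting at `a` and one ending at `b`: those two would either
cross or be disjoint.  They therefore form an extremal system inside `[a, b - 1]` or inside
`[a + 1, b]`, and the count doubles with each unit of length (`mem_fam`, `card_fam`).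
-/

/-- The point on the unit circle of `ℝ²` at angle `θ`. -/
noncomputable def pt (θ : ℝ) : EuclideanSpace ℝ (Fin 2) :=
  (WithLp.equiv 2 (Fin 2 → ℝ)).symm ![Real.cos θ, Real.sin θ]

variable {n : ℕ} [NeZero n]

/-- `k` lies strictly between `i` and `j` in counterclockwise cyclic order. -/
def CcwBtw (i k j : ZMod n) : Prop :=
  0 < (k - i).val ∧ (k - i).val < (j - i).val

/-- `d` is a diagonal of the convex polygon on indices `ZMod n`. -/
def IsDiag (d : Sym2 (ZMod n)) : Prop :=
  ∃ i j : ZMod n, d = s(i, j) ∧ j ≠ i - 1 ∧ j ≠ i ∧ j ≠ i + 1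

/-- `d` is a chord, i.e. a pair of cyclically consecutive indices. -/
def IsChord (d : Sym2 (ZMod n)) : Prop :=
  ∃ i : ZMod n, d = s(i, i + 1)

/-- Two diagonals `{i, j}` and `{k, l}` cross if exactly one of `k`, `l` lies
strictly between `i` and `j` in cyclic order (equivalently, one of them lies
strictly in the arc from `i` to `j` and the other strictly in the arc from `j`
to `i`). -/
def Crosses (d e : Sym2 (ZMod n)) : Prop :=
  ∃ i j k l : ZMod n, d = s(i, j) ∧ e = s(k, l) ∧ CcwBtw i k j ∧ CcwBtw j l i

/-- A triangulation: `n - 3` pairwise non-crossing diagonals. -/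
def IsTriangulation (τ : Finset (Sym2 (ZMod n))) : Prop :=
  τ.card = n - 3 ∧ (∀ d ∈ τ, IsDiag d) ∧ ∀ d ∈ τ, ∀ e ∈ τ, ¬ Crosses d e

/-- The length of the segment joining the two points indexed by `d`. -/
noncomputable def len (p : ZMod n → EuclideanSpace ℝ (Fin 2)) (d : Sym2 (ZMod n)) : ℝ :=
  Sym2.lift ⟨fun i j => ‖p i - p j‖, fun _ _ => norm_sub_rev _ _⟩ d

/-- `D(τ)`: the lengths of the diagonals of `τ` sorted in nondecreasing order. -/
noncomputable def sortedLengths (p : ZMod n → EuclideanSpace ℝ (Fin 2))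
    (τ : Finset (Sym2 (ZMod n))) : List ℝ :=
  (τ.val.map (len p)).sort (· ≤ ·)

/-- Lexicographic order on lists of reals. -/
def lexLE (l l' : List ℝ) : Prop := l = l' ∨ List.Lex (· < ·) l l'

/-- `τ` is length maximal: it is a triangulation whose sorted list of diagonal
lengths is greatest in the lexicographic order among all triangulations. -/
def LengthMaximal (p : ZMod n → EuclideanSpace ℝ (Fin 2))
    (τ : Finset (Sym2 (ZMod n))) : Prop :=
  IsTriangulation τ ∧
    ∀ τ' : Finset (Sym2 (ZMod n)), IsTriangulation τ' →
      lexLE (sortedLengths p τ') (sortedLengths p τ)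

/-- A side of a triangle of `τ`: a chord, or a diagonal belonging to `τ`. -/
def IsSide (τ : Finset (Sym2 (ZMod n))) (d : Sym2 (ZMod n)) : Prop :=
  IsChord d ∨ d ∈ τ

open scoped Classical in
/-- `A(τ)`: the `3(n-2)` angles of the triangles of `τ` sorted in nondecreasing
order.  Triangles are recorded as triples `a < b < c` (ordered by residue) all of
whose sides are chords or diagonals of `τ`, each contributing its three angles. -/
noncomputable def sortedAngles (p : ZMod n → EuclideanSpace ℝ (Fin 2))
    (τ : Finset (Sym2 (ZMod n))) : List ℝ :=
  ((Finset.univ.filter fun x : ZMod n × ZMod n × ZMod n =>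
      x.1.val < x.2.1.val ∧ x.2.1.val < x.2.2.val ∧
      IsSide τ s(x.1, x.2.1) ∧ IsSide τ s(x.2.1, x.2.2) ∧ IsSide τ s(x.1, x.2.2)).val.bind
    fun x =>
      {EuclideanGeometry.angle (p x.2.1) (p x.1) (p x.2.2),
       EuclideanGeometry.angle (p x.1) (p x.2.1) (p x.2.2),
       EuclideanGeometry.angle (p x.1) (p x.2.2) (p x.2.1)}).sort (· ≤ ·)

/-- `τ` is angle maximal: it is a triangulation whose sorted list of angles is
greatest in the lexicographic order among all triangulations. -/
def AngleMaximal (p : ZMod n → EuclideanSpace ℝ (Fin 2))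
    (τ : Finset (Sym2 (ZMod n))) : Prop :=
  IsTriangulation τ ∧
    ∀ τ' : Finset (Sym2 (ZMod n)), IsTriangulation τ' →
      lexLE (sortedAngles p τ') (sortedAngles p τ)

/-- The ear `e_i = {i-1, i+1}`. -/
def ear (i : ZMod n) : Sym2 (ZMod n) := s(i - 1, i + 1)

/-- `P` contains a symmetric quadruple: indices `i < j < k < l` with
`‖p i - p k‖ = ‖p j - p l‖`. -/
def HasSymQuad (p : ZMod n → EuclideanSpace ℝ (Fin 2)) : Prop :=
  ∃ i j k l : ZMod n, i.val < j.val ∧ j.val < k.val ∧ k.val < l.val ∧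
    ‖p i - p k‖ = ‖p j - p l‖

/-! ### Noncrossing systems of intervals -/

/-- Every member of `T` is an interval of length at least two contained in `[a, b]`; the pair
`(x, y)` encodes the interval from `x` to `y`. -/
def Inside (a b : ℕ) (T : Finset (ℕ × ℕ)) : Prop :=
  ∀ p ∈ T, a ≤ p.1 ∧ p.1 + 2 ≤ p.2 ∧ p.2 ≤ b

/-- No two members of `T` cross. -/
def NC (T : Finset (ℕ × ℕ)) : Prop :=
  ∀ p ∈ T, ∀ q ∈ T, ¬ (p.1 < q.1 ∧ q.1 < p.2 ∧ p.2 < q.2)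

/-- The members of `T` of length two. -/
def short (T : Finset (ℕ × ℕ)) : Finset (ℕ × ℕ) := T.filter fun p => p.2 = p.1 + 2

/-- A split point of `(x, y)` is the largest `z < y` such that `z = x + 1` or `(x, z) ∈ T`; it is
the apex of the triangle lying on the inner side of `(x, y)`.  Distinct members of a noncrossing
system have distinct split points, all strictly between `a` and `b`. -/
lemma card_lt_of_noncrossing {a b : ℕ} {T : Finset (ℕ × ℕ)} (hab : a < b) (hI : Inside a b T)
    (hN : NC T) : T.card + 1 ≤ b - a := by
  have key : ∀ p ∈ T, ∃ z, p.1 < z ∧ z < p.2 ∧ (z = p.1 + 1 ∨ (p.1, z) ∈ T) ∧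
      ∀ w, w < p.2 → (p.1, w) ∈ T → w ≤ z := by
    intro p hp
    have h := hI p hp
    let A := (Finset.range p.2).filter fun z => z = p.1 + 1 ∨ (p.1, z) ∈ T
    have hA : A.Nonempty := ⟨p.1 + 1, by simp [A]; omega⟩
    have hm := A.max'_mem hA
    simp only [A, Finset.mem_filter, Finset.mem_range] at hm
    refine ⟨A.max' hA, ?_, hm.1, hm.2, ?_⟩
    · have : p.1 + 1 ≤ A.max' hA := A.le_max' _ (by simp [A]; omega)
      omega
    · intro w hw hwT
      exact A.le_max' _ (by simp [A, hw, hwT])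
  choose! f h1 h2 h3 h4 using key
  have hcross : ∀ p ∈ T, ∀ q ∈ T, f p = f q → ¬ p.1 < q.1 := by
    intro p hp q hq hpq hlt
    have a1 := h1 q hq
    have a2 := h2 q hq
    rcases h3 p hp with h | h
    · omega
    · exact hN _ h q hq ⟨hlt, by simp; omega, by simp; omega⟩
  have hc : T.card ≤ (Finset.Ioo a b).card := by
    refine Finset.card_le_card_of_injOn f ?_ ?_
    · intro p hp
      have := hI p hp
      have := h1 p hp
      have := h2 p hp
      simp only [Finset.coe_Ioo, Set.mem_Ioo]; omega
    · intro p hp q hq hpq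
      have e1 : p.1 = q.1 := by
        have := hcross p hp q hq hpq
        have := hcross q hq p hp hpq.symm
        omega
      have e2 : p.2 = q.2 := by
        have b1 := h2 p hp
        have b2 := h2 q hq
        rcases lt_trichotomy p.2 q.2 with h | h | h
        · have := h4 q hq p.2 h (by rw [← e1]; exact hp)
          omega
        · exact h
        · have := h4 p hp q.2 h (by rw [e1]; exact hq)
          omega
      exact Prod.ext e1 e2
  rw [Nat.card_Ioo] at hc
  omega

/-- An extremal system is maximal: an interval crossing none of its members is one of them. -/
lemma mem_of_noncrossing {a b : ℕ} {T : Finset (ℕ × ℕ)} (hab : a < b) (hI : Inside a b T)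
    (hN : NC T) (hc : T.card + 1 = b - a) (p : ℕ × ℕ)
    (hp : a ≤ p.1 ∧ p.1 + 2 ≤ p.2 ∧ p.2 ≤ b)
    (h : ∀ q ∈ T, ¬ (p.1 < q.1 ∧ q.1 < p.2 ∧ p.2 < q.2) ∧
      ¬ (q.1 < p.1 ∧ p.1 < q.2 ∧ q.2 < p.2)) : p ∈ T := by
  by_contra hpT
  have h1 : Inside a b (insert p T) := by
    intro q hq
    rcases Finset.mem_insert.1 hq with rfl | hq
    · exact hp
    · exact hI q hq
  have h2 : NC (insert p T) := by
    intro q hq r hr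
    rcases Finset.mem_insert.1 hq with e | hq₁ <;> rcases Finset.mem_insert.1 hr with e' | hr₁
    · subst e e'; omega
    · subst e; exact (h r hr₁).1
    · subst e'; exact (h q hq₁).2
    · exact hN q hq₁ r hr₁
  have := card_lt_of_noncrossing hab h1 h2
  rw [Finset.card_insert_of_notMem hpT] at this
  omega

/-- If `(x, y)` is minimal among the members of an extremal system, then `(x, x + 2)` crosses no
member, hence is itself a member. -/
lemma exists_short {a b : ℕ} {T : Finset (ℕ × ℕ)} (hab : a < b) (hI : Inside a b T)
    (hN : NC T) (hc : T.card + 1 = b - a) :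
    ∀ l, ∀ p ∈ T, p.2 - p.1 = l → ∃ q ∈ short T, p.1 ≤ q.1 ∧ q.2 ≤ p.2 := by
  intro l
  induction l using Nat.strong_induction_on with
  | _ l ih =>
  intro p hp hl
  have hpI := hI p hp
  by_cases hsub : ∃ q ∈ T, p.1 ≤ q.1 ∧ q.2 ≤ p.2 ∧ q.2 - q.1 < l
  · obtain ⟨q, hq, q1, q2, q3⟩ := hsub
    obtain ⟨r, hr, r1, r2⟩ := ih _ q3 q hq rfl
    exact ⟨r, hr, by omega, by omega⟩
  · refine ⟨(p.1, p.1 + 2), ?_, by simp, by simp; omega⟩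
    refine Finset.mem_filter.2 ⟨?_, rfl⟩
    refine mem_of_noncrossing hab hI hN hc _ (by simp; omega) ?_
    intro q hq
    have hqI := hI q hq
    have n1 := hN p hp q hq
    have n2 := hN q hq p hp
    have n3 : ¬ (p.1 ≤ q.1 ∧ q.2 ≤ p.2 ∧ q.2 - q.1 < l) := fun h => hsub ⟨q, hq, h⟩
    simp only
    omega

/-- The noncrossing systems inside `[a, a + k + 2]` made of one interval of each length
`2, …, k + 2`, each obtained from the next longer one by deleting an end point. -/
def fam : ℕ → ℕ → Finset (Finset (ℕ × ℕ))
  | 0, a => {{(a, a + 2)}}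
  | k + 1, a => (fam k a ∪ fam k (a + 1)).image (insert (a, a + k + 3))

/-- `fam k a` consists of the extremal noncrossing systems inside `[a, a + k + 2]` that have
exactly one member of length two. -/
lemma mem_fam (k : ℕ) : ∀ (a : ℕ) (T : Finset (ℕ × ℕ)), T ∈ fam k a ↔
    Inside a (a + k + 2) T ∧ NC T ∧ T.card = k + 1 ∧ (short T).card = 1 := by
  induction k with
  | zero =>
    intro a T
    simp only [fam, Finset.mem_singleton]
    constructor
    · rintro rfl
      simp [Inside, NC, short, Finset.filter_singleton]
    · rintro ⟨h1, -, h3, -⟩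
      obtain ⟨p, rfl⟩ := Finset.card_eq_one.1 h3
      have := h1 p (by simp)
      congr 1
      ext <;> simp <;> omega
  | succ k ih =>
    intro a T
    simp only [fam, Finset.mem_image, Finset.mem_union, ih]
    constructor
    · rintro ⟨T', hT', rfl⟩
      have hnot : (a, a + k + 3) ∉ T' := by
        intro h
        rcases hT' with h' | h'
        · have := h'.1 _ h; simp at this
        · have := h'.1 _ h; simp at this
      have hI : Inside a (a + k + 3) T' := by
        intro p hp
        rcases hT' with h' | h'
        · have := h'.1 _ hp; omega
        · have := h'.1 _ hp; omega
      have hN : NC T' := by rcases hT' with h' | h' <;> exact h'.2.1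
      have hc : T'.card = k + 1 := by rcases hT' with h' | h' <;> exact h'.2.2.1
      have hs : (short T').card = 1 := by rcases hT' with h' | h' <;> exact h'.2.2.2
      refine ⟨?_, ?_, ?_, ?_⟩
      · intro p hp
        rcases Finset.mem_insert.1 hp with rfl | hp
        · simp; omega
        · have := hI p hp; omega
      · intro p hp q hq
        rcases Finset.mem_insert.1 hp with rfl | hp <;> rcases Finset.mem_insert.1 hq with rfl | hq
        · omega
        · have := hI q hq; simp only; omega
        · have := hI p hp; simp only; omega
        · exact hN p hp q hq
      · rw [Finset.card_insert_of_notMem hnot, hc]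
      · rw [short, Finset.filter_insert, if_neg (by simp only; omega)]
        exact hs
    · rintro ⟨hI, hN, hc, hs⟩
      have hab : a < a + (k + 1) + 2 := by omega
      have hc' : T.card + 1 = a + (k + 1) + 2 - a := by omega
      have htop : (a, a + k + 3) ∈ T := by
        refine mem_of_noncrossing hab hI hN hc' _ (by simp only; omega) ?_
        intro q hq
        have := hI q hq
        simp only; omega
      have hE : ∀ p ∈ T.erase (a, a + k + 3), p ∈ T ∧ ¬ (p.1 = a ∧ p.2 = a + k + 3) := by
        intro p hp
        rw [Finset.mem_erase] at hp
        exact ⟨hp.2, fun h => hp.1 (Prod.ext h.1 h.2)⟩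
      have hN' : NC (T.erase (a, a + k + 3)) :=
        fun p hp q hq => hN p (hE p hp).1 q (hE q hq).1
      have hcE : (T.erase (a, a + k + 3)).card = k + 1 := by
        rw [Finset.card_erase_of_mem htop, hc]; rfl
      have hsE : (short (T.erase (a, a + k + 3))).card = 1 := by
        have : short (T.erase (a, a + k + 3)) = short T := by
          ext p
          simp only [short, Finset.mem_filter, Finset.mem_erase]
          constructor
          · tauto
          · rintro ⟨h1, h2⟩
            refine ⟨⟨?_, h1⟩, h2⟩
            rintro rfl
            simp only at h2; omega
        rw [this, hs]
      refine ⟨T.erase (a, a + k + 3), ?_, Finset.insert_erase htop⟩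
      by_cases hl : ∃ p ∈ T.erase (a, a + k + 3), p.2 = a + k + 3
      · right
        refine ⟨?_, hN', hcE, hsE⟩
        obtain ⟨p, hp, hp2⟩ := hl
        intro q hq
        have hqI := hI q (hE q hq).1
        have hpI := hI p (hE p hp).1
        have hpE := (hE p hp).2
        have hqE := (hE q hq).2
        suffices q.1 ≠ a by omega
        intro hqa
        -- `q` starts at `a`, `p` ends at the other end: not crossing, so disjoint
        have hd := hN q (hE q hq).1 p (hE p hp).1
        obtain ⟨r, hr, r1, r2⟩ := exists_short hab hI hN hc' _ p (hE p hp).1 rfl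
        obtain ⟨s, hs', s1, s2⟩ := exists_short hab hI hN hc' _ q (hE q hq).1 rfl
        have hrs : r = s := Finset.card_le_one.1 hs.le r hr s hs'
        have := (Finset.mem_filter.1 hr).2
        subst hrs
        omega
      · left
        refine ⟨?_, hN', hcE, hsE⟩
        intro q hq
        have := hI q (hE q hq).1
        have : q.2 ≠ a + k + 3 := fun h => hl ⟨q, hq, h⟩
        omega

lemma top_mem_fam {k a : ℕ} {T : Finset (ℕ × ℕ)} (h : T ∈ fam k a) : (a, a + k + 2) ∈ T := by
  cases k with
  | zero => simp only [fam, Finset.mem_singleton] at h; simp [h]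
  | succ k =>
    simp only [fam, Finset.mem_image] at h
    obtain ⟨T', -, rfl⟩ := h
    exact Finset.mem_insert_self _ _

lemma card_fam (k : ℕ) : ∀ a, (fam k a).card = 2 ^ k := by
  induction k with
  | zero => intro a; simp [fam]
  | succ k ih =>
    intro a
    rw [fam, Finset.card_image_of_injOn, Finset.card_union_of_disjoint, ih, ih, pow_succ]
    · ring
    · rw [Finset.disjoint_left]
      intro T h1 h2
      have := ((mem_fam _ _ _).1 h2).1 _ (top_mem_fam h1)
      simp at this
    · have hnot : ∀ T ∈ fam k a ∪ fam k (a + 1), (a, a + k + 3) ∉ T := by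
        intro T hT h
        rcases Finset.mem_union.1 hT with h' | h'
        · have := ((mem_fam _ _ _).1 h').1 _ h; simp at this
        · have := ((mem_fam _ _ _).1 h').1 _ h; simp at this
      intro T hT U hU h
      rw [← Finset.erase_insert (hnot T hT), ← Finset.erase_insert (hnot U hU)]
      rw [show insert (a, a + k + 3) T = insert (a, a + k + 3) U from h]

/-! ### From diagonals to intervals -/

/-- The chord or diagonal of the `n`-gon spanned by the interval `p`, when vertices are counted
counterclockwise from `i`. -/
def seg {n : ℕ} (i : ZMod n) (p : ℕ × ℕ) : Sym2 (ZMod n) := s(i + (p.1 : ZMod n), i + (p.2 : ZMod n))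

lemma val_sub_cast {n : ℕ} [NeZero n] (i : ZMod n) {u v : ℕ} (hu : u < n) (hv : v < n) :
    ((i + (u : ZMod n)) - (i + (v : ZMod n))).val = if v ≤ u then u - v else n + u - v := by
  have e : (i + (u : ZMod n)) - (i + (v : ZMod n)) = (u : ZMod n) - v := by ring
  rw [e]
  split_ifs with h
  · rw [← Nat.cast_sub h, ZMod.val_natCast_of_lt (by omega)]
  · have : (u : ZMod n) - v = ((n + u - v : ℕ) : ZMod n) := by
      rw [Nat.cast_sub (by omega)]; simp
    rw [this, ZMod.val_natCast_of_lt (by omega)]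

lemma exists_cast {n : ℕ} [NeZero n] (i j : ZMod n) : ∃ u < n, j = i + (u : ZMod n) :=
  ⟨(j - i).val, ZMod.val_lt _, by simp⟩

lemma add_cast_inj {n : ℕ} [NeZero n] (i : ZMod n) {u v : ℕ} (hu : u < n) (hv : v < n) :
    i + (u : ZMod n) = i + (v : ZMod n) ↔ u = v := by
  constructor
  · intro h
    have h' : (u : ZMod n) = v := by simpa using h
    have := congrArg ZMod.val h'
    rwa [ZMod.val_natCast_of_lt hu, ZMod.val_natCast_of_lt hv] at this
  · rintro rfl; rfl

lemma seg_inj {n : ℕ} [NeZero n] (i : ZMod n) {p q : ℕ × ℕ} (hp : p.1 < p.2) (hp' : p.2 < n)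
    (hq : q.1 < q.2) (hq' : q.2 < n) : seg i p = seg i q ↔ p = q := by
  simp only [seg, Sym2.eq_iff, Prod.ext_iff]
  rw [add_cast_inj i (by omega) (by omega), add_cast_inj i (by omega) (by omega),
    add_cast_inj i (by omega) (by omega), add_cast_inj i (by omega) (by omega)]
  omega

lemma crosses_seg {n : ℕ} [NeZero n] (i : ZMod n) {p q : ℕ × ℕ} (hp : p.1 < p.2) (hp' : p.2 < n)
    (hq : q.1 < q.2) (hq' : q.2 < n) : Crosses (seg i p) (seg i q) ↔
      (p.1 < q.1 ∧ q.1 < p.2 ∧ p.2 < q.2) ∨ (q.1 < p.1 ∧ p.1 < q.2 ∧ q.2 < p.2) := by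
  have h1 : p.1 < n := by omega
  have h2 : q.1 < n := by omega
  constructor
  · rintro ⟨a, b, c, d, e1, e2, h3, h4⟩
    simp only [seg, Sym2.eq_iff] at e1 e2
    rcases e1 with ⟨rfl, rfl⟩ | ⟨rfl, rfl⟩ <;> rcases e2 with ⟨rfl, rfl⟩ | ⟨rfl, rfl⟩ <;>
    · simp only [CcwBtw, val_sub_cast i, h1, h2, hp', hq'] at h3 h4
      split_ifs at h3 h4 <;> omega
  · rintro (h | h)
    · refine ⟨_, _, _, _, rfl, rfl, ?_, ?_⟩ <;>
      · simp only [CcwBtw, val_sub_cast i, h1, h2, hp', hq']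
        split_ifs <;> omega
    · refine ⟨_, _, _, _, rfl, Sym2.eq_swap, ?_, ?_⟩ <;>
      · simp only [CcwBtw, val_sub_cast i, h1, h2, hp', hq']
        split_ifs <;> omega

lemma add_one_cast {n : ℕ} [NeZero n] (i : ZMod n) {u : ℕ} :
    i + (u : ZMod n) + 1 = i + ((if u + 1 = n then 0 else u + 1 : ℕ) : ZMod n) := by
  split_ifs with h
  · have : ((u + 1 : ℕ) : ZMod n) = 0 := by rw [h]; simp
    push_cast at this ⊢
    rw [add_assoc, this]
  · push_cast; ring

lemma sub_one_cast {n : ℕ} [NeZero n] (i : ZMod n) {u : ℕ} (hu : u < n) :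
    i + (u : ZMod n) - 1 = i + ((if u = 0 then n - 1 else u - 1 : ℕ) : ZMod n) := by
  have hn : 0 < n := Nat.pos_of_ne_zero (NeZero.ne n)
  split_ifs with h
  · subst h
    rw [Nat.cast_sub (by omega)]; simp; ring
  · rw [Nat.cast_sub (by omega)]; push_cast; ring

lemma isDiag_seg {n : ℕ} [NeZero n] (i : ZMod n) {p : ℕ × ℕ} (hp : p.1 < p.2) (hp' : p.2 < n) :
    IsDiag (seg i p) ↔ p.1 + 2 ≤ p.2 ∧ ¬ (p.1 = 0 ∧ p.2 + 1 = n) := by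
  have h1 : p.1 < n := by omega
  constructor
  · rintro ⟨a, b, e, h2, h3, h4⟩
    simp only [seg, Sym2.eq_iff] at e
    rcases e with ⟨rfl, rfl⟩ | ⟨rfl, rfl⟩
    · rw [sub_one_cast i h1, Ne, add_cast_inj i hp' (by split_ifs <;> omega)] at h2
      rw [add_one_cast i, Ne, add_cast_inj i hp' (by split_ifs <;> omega)] at h4
      split_ifs at h2 h4 <;> omega
    · rw [sub_one_cast i hp', Ne, add_cast_inj i h1 (by split_ifs <;> omega)] at h2
      rw [add_one_cast i, Ne, add_cast_inj i h1 (by split_ifs <;> omega)] at h4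
      split_ifs at h2 h4 <;> omega
  · rintro h
    refine ⟨_, _, rfl, ?_, ?_, ?_⟩
    · rw [sub_one_cast i h1, Ne, add_cast_inj i hp' (by split_ifs <;> omega)]
      split_ifs <;> omega
    · rw [Ne, add_cast_inj i hp' h1]; omega
    · rw [add_one_cast i, Ne, add_cast_inj i hp' (by split_ifs <;> omega)]
      split_ifs <;> omega

lemma ear_zero {n : ℕ} [NeZero n] (hn : 5 ≤ n) (i : ZMod n) : ear i = seg i (1, n - 1) := by
  have h : ((n - 1 : ℕ) : ZMod n) = -1 := by rw [Nat.cast_sub (by omega)]; simp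
  simp only [ear, seg, h]
  rw [Sym2.eq_swap]
  simp [sub_eq_add_neg]

lemma ear_add {n : ℕ} [NeZero n] (i : ZMod n) (u : ℕ) :
    ear (i + ((u + 1 : ℕ) : ZMod n)) = seg i (u, u + 2) := by
  have h1 : i + ((u + 1 : ℕ) : ZMod n) - 1 = i + (u : ZMod n) := by push_cast; ring
  have h2 : i + ((u + 1 : ℕ) : ZMod n) + 1 = i + ((u + 2 : ℕ) : ZMod n) := by push_cast; ring
  rw [ear, seg, h1, h2]

/-- The ears are the ear at `i` and one for each member of length two. -/
lemma card_ears {n : ℕ} [NeZero n] (hn : 5 ≤ n) (i : ZMod n) {T : Finset (ℕ × ℕ)}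
    (hI : Inside 1 (n - 1) T) (htop : (1, n - 1) ∈ T) :
    (Finset.univ.filter fun j : ZMod n => ear j ∈ T.image (seg i)).card = (short T).card + 1 := by
  have hmem : ∀ q : ℕ × ℕ, q.1 < q.2 → q.2 < n → (seg i q ∈ T.image (seg i) ↔ q ∈ T) := by
    intro q h1 h2
    constructor
    · intro h
      obtain ⟨p, hp, e⟩ := Finset.mem_image.1 h
      have := hI p hp
      rw [seg_inj i (by omega) (by omega) h1 h2] at e
      exact e ▸ hp
    · exact Finset.mem_image_of_mem _
  have key : (Finset.univ.filter fun j : ZMod n => ear j ∈ T.image (seg i)) =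
      insert i ((short T).image fun p => i + ((p.1 + 1 : ℕ) : ZMod n)) := by
    ext j
    simp only [Finset.mem_filter, Finset.mem_univ, true_and, Finset.mem_insert]
    obtain ⟨u, hu, rfl⟩ := exists_cast i j
    constructor
    · intro h
      rcases u with _ | u
      · left; simp
      · right
        rw [ear_add] at h
        by_cases hun : u + 2 < n
        · rw [hmem _ (by simp) hun] at h
          exact Finset.mem_image.2 ⟨_, Finset.mem_filter.2 ⟨h, rfl⟩, rfl⟩
        · exfalso
          -- the ear at `i - 1` ends at `i`, which no member of the image does
          obtain ⟨p, hp, e⟩ := Finset.mem_image.1 h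
          have hpI := hI p hp
          have hu2 : u + 2 = n := by omega
          have e' : seg i (u, u + 2) = seg i (0, u) := by
            simp only [seg, hu2]
            rw [Sym2.eq_swap]; simp
          rw [e', seg_inj i (by omega) (by omega) (by simp only; omega) (by simp only; omega)] at e
          simp [e] at hpI
    · rintro (h | h)
      · rw [h, ear_zero hn]
        exact Finset.mem_image_of_mem _ htop
      · obtain ⟨p, hp, e⟩ := Finset.mem_image.1 h
        obtain ⟨h1, h2⟩ := Finset.mem_filter.1 hp
        rw [← e, ear_add, ← h2]
        exact Finset.mem_image_of_mem _ h1
  rw [key, Finset.card_insert_of_notMem, Finset.card_image_of_injOn]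
  · intro p hp q hq e
    obtain ⟨h1, h2⟩ := Finset.mem_filter.1 hp
    obtain ⟨h3, h4⟩ := Finset.mem_filter.1 hq
    have := hI p h1
    have := hI q h3
    simp only at e
    rw [add_cast_inj i (by omega) (by omega)] at e
    exact Prod.ext (by omega) (by omega)
  · intro h
    obtain ⟨p, hp, e⟩ := Finset.mem_image.1 h
    have := hI p (Finset.mem_filter.1 hp).1
    have e' : i + ((p.1 + 1 : ℕ) : ZMod n) = i + ((0 : ℕ) : ZMod n) := by simpa using e
    rw [add_cast_inj i (by omega) (by omega)] at e'
    omega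

lemma seg_injOn {n : ℕ} [NeZero n] (hn : 5 ≤ n) (i : ZMod n) {T : Finset (ℕ × ℕ)}
    (hI : Inside 1 (n - 1) T) : Set.InjOn (seg i) T := by
  intro p hp q hq e
  have := hI p hp
  have := hI q hq
  rwa [seg_inj i (by omega) (by omega) (by omega) (by omega)] at e

/-- A set of diagonals, none of which crosses `ear i`, comes from intervals inside
`[1, n - 1]`. -/
lemma exists_intervals {n : ℕ} [NeZero n] (hn : 5 ≤ n) (i : ZMod n)
    {τ : Finset (Sym2 (ZMod n))} (hd : ∀ d ∈ τ, IsDiag d) (hc : ∀ d ∈ τ, ¬ Crosses (ear i) d) :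
    ∃ T, Inside 1 (n - 1) T ∧ τ = T.image (seg i) := by
  refine ⟨(Finset.range n ×ˢ Finset.range n).filter
    fun p => 1 ≤ p.1 ∧ p.1 + 2 ≤ p.2 ∧ seg i p ∈ τ, ?_, ?_⟩
  · intro p hp
    simp only [Finset.mem_filter, Finset.mem_product, Finset.mem_range] at hp
    omega
  · ext d
    simp only [Finset.mem_image, Finset.mem_filter, Finset.mem_product, Finset.mem_range]
    constructor
    · intro h
      have hseg : ∃ p : ℕ × ℕ, p.1 < p.2 ∧ p.2 < n ∧ d = seg i p := by
        obtain ⟨a, b, e, -, hne, -⟩ := hd d h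
        obtain ⟨u, hu, rfl⟩ := exists_cast i a
        obtain ⟨v, hv, rfl⟩ := exists_cast i b
        rw [Ne, add_cast_inj i hv hu] at hne
        rcases Nat.lt_or_gt_of_ne hne with hlt | hlt
        · exact ⟨(v, u), hlt, hu, e.trans Sym2.eq_swap⟩
        · exact ⟨(u, v), hlt, hv, e⟩
      obtain ⟨p, h1, h2, rfl⟩ := hseg
      have h3 := (isDiag_seg i h1 h2).1 (hd _ h)
      have h4 := hc _ h
      rw [ear_zero hn, crosses_seg i (by simp only; omega) (by simp only; omega) h1 h2] at h4
      simp only at h4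
      exact ⟨p, ⟨⟨by omega, by omega⟩, by omega, by omega, h⟩, rfl⟩
    · rintro ⟨p, ⟨-, -, -, h⟩, rfl⟩
      exact h

lemma isTriangulation_image {n : ℕ} [NeZero n] (hn : 5 ≤ n) (i : ZMod n) {T : Finset (ℕ × ℕ)}
    (hI : Inside 1 (n - 1) T) :
    IsTriangulation (T.image (seg i)) ↔ T.card = n - 3 ∧ NC T := by
  rw [IsTriangulation, Finset.card_image_of_injOn (seg_injOn hn i hI)]
  refine and_congr_right fun _ => ?_
  simp only [Finset.forall_mem_image]
  constructor
  · rintro ⟨-, h⟩ p hp q hq hpq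
    have := hI p hp
    have := hI q hq
    exact h hp hq ((crosses_seg i (by omega) (by omega) (by omega) (by omega)).2 (Or.inl hpq))
  · intro h
    refine ⟨fun p hp => ?_, fun p hp q hq hpq => ?_⟩
    · have := hI p hp
      rw [isDiag_seg i (by omega) (by omega)]
      omega
    · have := hI p hp
      have := hI q hq
      rw [crosses_seg i (by omega) (by omega) (by omega) (by omega)] at hpq
      rcases hpq with hpq | hpq
      · exact h p hp q hq hpq
      · exact h q hq p hp hpq

/-! ### Two-ear triangulations with a prescribed ear -/

open scoped Classical in
/-- There are `2 ^ (n - 4)` two-ear triangulations with a prescribed ear. -/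
lemma card_fiber {n : ℕ} [NeZero n] (hn : 5 ≤ n) (i : ZMod n) :
    (Finset.univ.filter fun τ : Finset (Sym2 (ZMod n)) => (IsTriangulation τ ∧
      (Finset.univ.filter fun i : ZMod n => ear i ∈ τ).card = 2) ∧ ear i ∈ τ).card =
      2 ^ (n - 4) := by
  have hn1 : 1 + (n - 4) + 2 = n - 1 := by omega
  rw [← card_fam (n - 4) 1, ← Finset.card_image_of_injOn (s := fam (n - 4) 1)
    (f := fun T => T.image (seg i))]
  · congr 1
    ext τ
    simp only [Finset.mem_filter, Finset.mem_univ, true_and, Finset.mem_image, mem_fam, hn1]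
    constructor
    · rintro ⟨⟨ht, he⟩, hi⟩
      obtain ⟨T, hI, rfl⟩ := exists_intervals hn i ht.2.1 (fun d hd => ht.2.2 _ hi d hd)
      have htop : (1, n - 1) ∈ T := by
        rw [ear_zero hn] at hi
        obtain ⟨p, hp, e⟩ := Finset.mem_image.1 hi
        have := hI p hp
        rw [seg_inj i (by omega) (by omega) (by simp only; omega) (by simp only; omega)] at e
        exact e ▸ hp
      rw [card_ears hn i hI htop] at he
      rw [isTriangulation_image hn i hI] at ht
      exact ⟨T, ⟨hI, ht.2, by omega, by omega⟩, rfl⟩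
    · rintro ⟨T, hT, rfl⟩
      have htop : (1, n - 1) ∈ T := by
        have := top_mem_fam ((mem_fam (n - 4) 1 T).2 (by rw [hn1]; exact hT))
        rwa [hn1] at this
      obtain ⟨hI, hN, hc, hs⟩ := hT
      refine ⟨⟨(isTriangulation_image hn i hI).2 ⟨by omega, hN⟩, ?_⟩, ?_⟩
      · rw [card_ears hn i hI htop, hs]
      · rw [ear_zero hn]
        exact Finset.mem_image_of_mem _ htop
  · intro T hT U hU e
    have hT' := ((mem_fam _ _ _).1 hT).1
    have hU' := ((mem_fam _ _ _).1 hU).1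
    rw [hn1] at hT' hU'
    have hTU : Inside 1 (n - 1) (T ∪ U) := by
      intro p hp
      rcases Finset.mem_union.1 hp with h | h
      · exact hT' p h
      · exact hU' p h
    have hinj := seg_injOn hn i hTU
    have e' := congrArg (fun A : Finset (Sym2 (ZMod n)) => (A : Set (Sym2 (ZMod n)))) e
    simp only [Finset.coe_image] at e'
    rw [hinj.image_eq_image_iff (by simp) (by simp)] at e'
    exact_mod_cast e'

theorem stmt9 {n : ℕ} [NeZero n] (hn : 5 ≤ n) :
    Nat.card {τ : Finset (Sym2 (ZMod n)) //
        IsTriangulation τ ∧ (Finset.univ.filter fun i : ZMod n => ear i ∈ τ).card = 2} =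
      n * 2 ^ (n - 5) := by
  classical
  rw [Nat.card_eq_fintype_card, Fintype.card_subtype]
  set S := Finset.univ.filter fun τ : Finset (Sym2 (ZMod n)) => IsTriangulation τ ∧
    (Finset.univ.filter fun i : ZMod n => ear i ∈ τ).card = 2 with hS
  have h := Finset.sum_card_bipartiteAbove_eq_sum_card_bipartiteBelow
    (s := S) (t := (Finset.univ : Finset (ZMod n))) (fun τ i => ear i ∈ τ)
  have h1 : ∑ τ ∈ S, (Finset.univ.bipartiteAbove (fun τ (i : ZMod n) => ear i ∈ τ) τ).card =
      S.card * 2 := by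
    rw [Finset.sum_const_nat]
    intro τ hτ
    exact (Finset.mem_filter.1 hτ).2.2
  have h2 : ∑ i : ZMod n, (S.bipartiteBelow (fun τ (i : ZMod n) => ear i ∈ τ) i).card =
      n * 2 ^ (n - 4) := by
    rw [Finset.sum_const_nat (m := 2 ^ (n - 4)), Finset.card_univ, ZMod.card]
    intro i _
    rw [Finset.bipartiteBelow, hS, Finset.filter_filter]
    exact card_fiber hn i
  rw [h1, h2, show n - 4 = n - 5 + 1 by omega, pow_succ, ← mul_assoc] at h
  exact Nat.eq_of_mul_eq_mul_right (by norm_num) h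
end

section
/- Let p, q, r, s be four distinct points on the unit circle of ℝ² listed in counterclockwise cyclic order (i.e. p = (cos α, sin α), q = (cos β, sin β), r = (cos γ, sin γ), s = (cos δ, sin δ) with 0 ≤ α < β < γ < δ < 2π). Then ‖p − r‖ = ‖q − s‖ if and only if there exists an isometry f of the Euclidean plane with f ∘ f = id such that either (f p = q and f r = s) or (f p = s and f q = r). -/
/-- The underlying map of the reflection in the line through the origin at angle `φ / 2`. -/
noncomputable def reflFun (φ : ℝ) (x : EuclideanSpace ℝ (Fin 2)) : EuclideanSpace ℝ (Fin 2) :=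
  !₂[Real.cos φ * x 0 + Real.sin φ * x 1, Real.sin φ * x 0 - Real.cos φ * x 1]

theorem reflFun_reflFun (φ : ℝ) (x : EuclideanSpace ℝ (Fin 2)) :
    reflFun φ (reflFun φ x) = x := by
  have h := Real.sin_sq_add_cos_sq φ
  ext i
  fin_cases i
  · simp [reflFun]
    linear_combination x 0 * h
  · simp [reflFun]
    linear_combination x 1 * h

theorem reflFun_isometry (φ : ℝ) : Isometry (reflFun φ) := by
  have h := Real.sin_sq_add_cos_sq φ
  refine Isometry.of_dist_eq fun x y => ?_
  rw [EuclideanSpace.dist_eq, EuclideanSpace.dist_eq]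
  congr 1
  simp only [Fin.sum_univ_two, Real.dist_eq, sq_abs, reflFun, PiLp.toLp_apply,
    Matrix.cons_val_zero, Matrix.cons_val_one]
  linear_combination ((x 0 - y 0) ^ 2 + (x 1 - y 1) ^ 2) * h

/-- The reflection in the line through the origin at angle `φ / 2`, as an isometry of the plane. -/
noncomputable def planeRefl (φ : ℝ) : EuclideanSpace ℝ (Fin 2) ≃ᵢ EuclideanSpace ℝ (Fin 2) :=
  IsometryEquiv.mk' (reflFun φ) (reflFun φ) (reflFun_reflFun φ) (reflFun_isometry φ)

theorem planeRefl_planeRefl (φ : ℝ) (x : EuclideanSpace ℝ (Fin 2)) : planeRefl φ (planeRefl φ x) = x :=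
  reflFun_reflFun φ x

theorem planeRefl_pt (φ θ : ℝ) : planeRefl φ (pt θ) = pt (φ - θ) := by
  change reflFun φ (pt θ) = pt (φ - θ)
  ext i
  fin_cases i
  · simp [reflFun, pt, Real.cos_sub]
  · simp [reflFun, pt, Real.sin_sub]

theorem pt_sub_two_pi (θ : ℝ) : pt (θ - 2 * Real.pi) = pt θ := by
  simp [pt]

theorem norm_pt_sub_sq (a b : ℝ) : ‖pt a - pt b‖ ^ 2 = 2 - 2 * Real.cos (a - b) := by
  rw [EuclideanSpace.norm_sq_eq]
  simp [Fin.sum_univ_two, pt, Real.cos_sub]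
  linear_combination Real.sin_sq_add_cos_sq a + Real.sin_sq_add_cos_sq b

/-- On `(0, 2π)` the cosine takes equal values only at equal arguments or at arguments symmetric
about `π`. -/
theorem eq_or_add_eq_of_cos_eq {x y : ℝ} (hx : 0 < x) (hx' : x < 2 * Real.pi) (hy : 0 < y)
    (hy' : y < 2 * Real.pi) (h : Real.cos x = Real.cos y) : x = y ∨ x + y = 2 * Real.pi := by
  have hpi := Real.pi_pos
  obtain ⟨k, hk | hk⟩ := Real.cos_eq_cos_iff.1 h
  · left
    have h1 : (k : ℝ) < 1 := by
      by_contra! hc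
      nlinarith
    have h2 : (-1 : ℝ) < k := by
      by_contra! hc
      nlinarith
    have h0 : k = 0 := by
      have h1' : k < 1 := by exact_mod_cast h1
      have h2' : -1 < k := by exact_mod_cast h2
      omega
    subst h0
    simpa using hk.symm
  · right
    have h1 : (k : ℝ) < 2 := by
      by_contra! hc
      nlinarith
    have h2 : (0 : ℝ) < k := by
      by_contra! hc
      nlinarith
    have h0 : k = 1 := by
      have h1' : k < 2 := by exact_mod_cast h1
      have h2' : 0 < k := by exact_mod_cast h2
      omega
    subst h0
    push_cast at hk
    linarith

theorem stmt10 (α β γ δ : ℝ)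
    (h0 : 0 ≤ α) (h1 : α < β) (h2 : β < γ) (h3 : γ < δ) (h4 : δ < 2 * Real.pi)
    (p q r s : EuclideanSpace ℝ (Fin 2))
    (hp : p = pt α) (hq : q = pt β) (hr : r = pt γ) (hs : s = pt δ) :
    ‖p - r‖ = ‖q - s‖ ↔
      ∃ f : EuclideanSpace ℝ (Fin 2) ≃ᵢ EuclideanSpace ℝ (Fin 2),
        (∀ x, f (f x) = x) ∧ ((f p = q ∧ f r = s) ∨ (f p = s ∧ f q = r)) := by
  constructor
  · intro h
    have hcos : Real.cos (γ - α) = Real.cos (δ - β) := by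
      have h' : ‖r - p‖ ^ 2 = ‖s - q‖ ^ 2 := by rw [norm_sub_rev r, norm_sub_rev s, h]
      rw [hp, hq, hr, hs, norm_pt_sub_sq, norm_pt_sub_sq] at h'
      linarith
    subst hp hq hr hs
    rcases eq_or_add_eq_of_cos_eq (by linarith) (by linarith) (by linarith) (by linarith) hcos
      with h | h
    · refine ⟨planeRefl (α + δ), planeRefl_planeRefl _, Or.inr ⟨?_, ?_⟩⟩
      · rw [planeRefl_pt, add_sub_cancel_left]
      · rw [planeRefl_pt]
        congr 1
        linarith
    · refine ⟨planeRefl (α + β), planeRefl_planeRefl _, Or.inl ⟨?_, ?_⟩⟩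
      · rw [planeRefl_pt, add_sub_cancel_left]
      · rw [planeRefl_pt, ← pt_sub_two_pi δ]
        congr 1
        linarith
  · rintro ⟨f, hf, ⟨hpq, hrs⟩ | ⟨hps, hqr⟩⟩
    · rw [← dist_eq_norm, ← dist_eq_norm, ← hpq, ← hrs, f.dist_eq]
    · have hrq : f r = q := by rw [← hqr, hf]
      rw [← dist_eq_norm, ← dist_eq_norm, ← hrq, ← hps, f.dist_eq, dist_comm]
end

section
/- Let n ≥ 5 and let P = {p_0, …, p_{n−1}} be n distinct points on the unit circle listed in counterclockwise cyclic order, containing no symmetric quadruple. Suppose exactly two ears e and e' (e ≠ e') attain the maximal length among all ears of P, and ‖e‖ = ‖e'‖. Then e and e' do not cross, and every length maximal triangulation of P contains both e and e'. -/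
variable {n : ℕ} [NeZero n]

set_option linter.unusedSectionVars false

/-! ### Non-crossing families of pairs of naturals -/

/-- A family of pairs in which no two interleave strictly. -/
def NonCrossing (S : Finset (ℕ × ℕ)) : Prop :=
  ∀ p ∈ S, ∀ q ∈ S, ¬ (p.1 < q.1 ∧ q.1 < p.2 ∧ p.2 < q.2)

/-- A vertex strictly inside a shortest pair of a non-crossing family is on no pair. -/
lemma not_endpoint_of_shortest {S : Finset (ℕ × ℕ)} (hlt : ∀ p ∈ S, p.1 < p.2)
    (hS : NonCrossing S) {m : ℕ × ℕ} (hm : m ∈ S)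
    (hmin : ∀ p ∈ S, m.2 - m.1 ≤ p.2 - p.1) {v : ℕ} (h1 : m.1 < v) (h2 : v < m.2)
    {p : ℕ × ℕ} (hp : p ∈ S) : p.1 ≠ v ∧ p.2 ≠ v := by
  have a := hS m hm p hp
  have b := hS p hp m hm
  have c := hmin p hp
  have d := hlt p hp
  constructor <;> intro h <;> omega

lemma card_pairs_le (V : Finset ℕ) : ∀ S : Finset (ℕ × ℕ),
    (∀ p ∈ S, p.1 ∈ V ∧ p.2 ∈ V ∧ ∃ v ∈ V, p.1 < v ∧ v < p.2) → NonCrossing S →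
    S.card ≤ V.card - 2 := by
  induction hN : V.card generalizing V with
  | zero =>
    intro S h _
    have hV : V = ∅ := Finset.card_eq_zero.mp hN
    have : S = ∅ := by
      refine Finset.eq_empty_of_forall_notMem fun p hp => ?_
      have := (h p hp).1
      simp [hV] at this
    simp [this]
  | succ N ih =>
    intro S h hS
    rcases S.eq_empty_or_nonempty with rfl | hne
    · simp
    obtain ⟨m, hm, hmin⟩ := Finset.exists_min_image S (fun p => p.2 - p.1) hne
    have hlt : ∀ p ∈ S, p.1 < p.2 := fun p hp => by
      obtain ⟨_, _, v, _, h1, h2⟩ := h p hp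
      omega
    obtain ⟨hm1, hm2, v, hv, h1, h2⟩ := h m hm
    have hcard : (V.erase v).card = N := by rw [Finset.card_erase_of_mem hv, hN]; rfl
    have key := ih (V.erase v) hcard (S.erase m) ?_ ?_
    · rw [Finset.card_erase_of_mem hm] at key
      have : ({m.1, v, m.2} : Finset ℕ).card ≤ V.card := by
        apply Finset.card_le_card
        intro x hx
        simp only [Finset.mem_insert, Finset.mem_singleton] at hx
        rcases hx with rfl | rfl | rfl <;> assumption
      rw [Finset.card_eq_three.mpr ⟨m.1, v, m.2, by omega, by omega, by omega, rfl⟩] at this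
      omega
    · intro p hp
      obtain ⟨hpm, hp⟩ := Finset.mem_erase.mp hp
      obtain ⟨hp1, hp2, u, hu, g1, g2⟩ := h p hp
      obtain ⟨n1, n2⟩ := not_endpoint_of_shortest hlt hS hm hmin h1 h2 hp
      refine ⟨Finset.mem_erase.mpr ⟨n1, hp1⟩, Finset.mem_erase.mpr ⟨n2, hp2⟩, ?_⟩
      by_cases huv : u = v
      · -- `p` has `v` inside; an endpoint of `m` inside `p` is the required other vertex
        subst huv
        by_cases c1 : p.1 < m.1
        · exact ⟨m.1, Finset.mem_erase.mpr ⟨by omega, hm1⟩, c1, by omega⟩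
        by_cases c2 : m.2 < p.2
        · exact ⟨m.2, Finset.mem_erase.mpr ⟨by omega, hm2⟩, by omega, c2⟩
        have c3 := hmin p hp
        exact absurd (Prod.ext (by omega) (by omega)) hpm
      · exact ⟨u, Finset.mem_erase.mpr ⟨huv, hu⟩, g1, g2⟩
    · intro p hp q hq
      exact hS p (Finset.mem_of_mem_erase hp) q (Finset.mem_of_mem_erase hq)

lemma exists_ear_pair {N : ℕ} (hN : 3 ≤ N) {S : Finset (ℕ × ℕ)}
    (h : ∀ p ∈ S, p.1 + 2 ≤ p.2 ∧ p.2 < N) (hS : NonCrossing S) (hc : N - 2 ≤ S.card) :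
    ∃ x, (x, x + 2) ∈ S := by
  by_contra! hno
  have hne : S.Nonempty := Finset.card_pos.mp (by omega)
  have hlong : ∀ p ∈ S, p.1 + 3 ≤ p.2 := fun p hp => by
    by_contra hlt
    have h2 : p.2 = p.1 + 2 := by have := (h p hp).1; omega
    exact hno p.1 (h2 ▸ hp)
  obtain ⟨m, hm, hmin⟩ := Finset.exists_min_image S (fun p => p.2 - p.1) hne
  have hml := hlong m hm
  have hmN := (h m hm).2
  -- without ears, `m.1 + 1` can be deleted while every pair keeps an interior vertex
  have key := card_pairs_le ((Finset.range N).erase (m.1 + 1)) S ?_ hS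
  · rw [Finset.card_erase_of_mem (by simp; omega), Finset.card_range] at key
    omega
  · intro p hp
    have hl := hlong p hp
    have hpN := (h p hp).2
    obtain ⟨n1, n2⟩ := not_endpoint_of_shortest (fun q hq => by have := hlong q hq; omega) hS hm
      hmin (v := m.1 + 1) (by omega) (by omega) hp
    simp only [Finset.mem_erase, Finset.mem_range]
    refine ⟨⟨n1, by omega⟩, ⟨n2, by omega⟩, ?_⟩
    by_cases c : p.1 = m.1
    · exact ⟨p.1 + 2, ⟨by omega, by omega⟩, by omega, by omega⟩
    · exact ⟨p.1 + 1, ⟨by omega, by omega⟩, by omega, by omega⟩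

/-! ### Positions relative to a base vertex -/

lemma val_sub_pos (r : ZMod n) {x y : ℕ} (hx : x < n) (hy : y < n) :
    ((r + (y : ZMod n)) - (r + (x : ZMod n))).val = if x ≤ y then y - x else n + y - x := by
  split_ifs with h
  · have : (r + (y : ZMod n)) - (r + (x : ZMod n)) = ((y - x : ℕ) : ZMod n) := by
      rw [Nat.cast_sub h]; ring
    rw [this, ZMod.val_natCast_of_lt (by omega)]
  · have : (r + (y : ZMod n)) - (r + (x : ZMod n)) = ((n + y - x : ℕ) : ZMod n) := by
      rw [Nat.cast_sub (by omega)]; push_cast; simp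
    rw [this, ZMod.val_natCast_of_lt (by omega)]

lemma exists_pos (r v : ZMod n) : ∃ x < n, v = r + (x : ZMod n) :=
  ⟨(v - r).val, ZMod.val_lt _, by simp⟩

lemma pos_inj {r : ZMod n} {x y : ℕ} (hx : x < n) (hy : y < n)
    (h : r + (x : ZMod n) = r + (y : ZMod n)) : x = y := by
  have := congrArg ZMod.val (add_left_cancel h)
  rwa [ZMod.val_natCast_of_lt hx, ZMod.val_natCast_of_lt hy] at this

lemma ccwBtw_pos_iff (r : ZMod n) {x y z : ℕ} (hx : x < n) (hy : y < n) (hz : z < n) :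
    CcwBtw (r + (x : ZMod n)) (r + (y : ZMod n)) (r + (z : ZMod n)) ↔
      (x < y ∧ y < z) ∨ (y < z ∧ z < x) ∨ (z < x ∧ x < y) := by
  unfold CcwBtw
  rw [val_sub_pos r hx hy, val_sub_pos r hx hz]
  split_ifs <;> omega

lemma crosses_pos (r : ZMod n) {x y s t : ℕ} (hxs : x < s) (hsy : s < y) (hyt : y < t)
    (ht : t < n) :
    Crosses s(r + (x : ZMod n), r + (y : ZMod n)) s(r + (s : ZMod n), r + (t : ZMod n)) := by
  refine ⟨_, _, _, _, rfl, rfl, ?_, ?_⟩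
  · rw [ccwBtw_pos_iff r (by omega) (by omega) (by omega)]; omega
  · rw [ccwBtw_pos_iff r (by omega) (by omega) (by omega)]; omega

lemma of_crosses_pos {r : ZMod n} {x y s t : ℕ} (hxy : x < y) (hy : y < n) (hst : s < t)
    (ht : t < n)
    (h : Crosses s(r + (x : ZMod n), r + (y : ZMod n)) s(r + (s : ZMod n), r + (t : ZMod n))) :
    (x < s ∧ s < y ∧ y < t) ∨ (s < x ∧ x < t ∧ t < y) := by
  obtain ⟨a, b, c, d, h1, h2, h3, h4⟩ := h
  rw [Sym2.eq_iff] at h1 h2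
  rcases h1 with ⟨rfl, rfl⟩ | ⟨rfl, rfl⟩ <;> rcases h2 with ⟨rfl, rfl⟩ | ⟨rfl, rfl⟩ <;>
    rw [ccwBtw_pos_iff r (by omega) (by omega) (by omega)] at h3 h4 <;> omega

lemma isDiag_pos (r : ZMod n) {x y : ℕ} (hxy : x + 2 ≤ y) (hy : y < n) (h : y < x + n - 1) :
    IsDiag s(r + (x : ZMod n), r + (y : ZMod n)) := by
  have hn0 : (n : ZMod n) = 0 := ZMod.natCast_self n
  refine ⟨_, _, rfl, fun e => ?_, fun e => ?_, fun e => ?_⟩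
  · rcases Nat.eq_zero_or_pos x with rfl | hx
    · have e' : r + (y : ZMod n) = r + ((n - 1 : ℕ) : ZMod n) := by
        rw [e, Nat.cast_sub (by omega), hn0]; push_cast; ring
      have := pos_inj hy (by omega) e'
      omega
    · have e' : r + (y : ZMod n) = r + ((x - 1 : ℕ) : ZMod n) := by
        rw [e, Nat.cast_sub hx]; push_cast; ring
      have := pos_inj hy (by omega) e'
      omega
  · have := pos_inj hy (by omega) e
    omega
  · have e' : r + (y : ZMod n) = r + ((x + 1 : ℕ) : ZMod n) := by
      rw [e]; push_cast; ring
    have := pos_inj hy (by omega) e'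
    omega

lemma of_isDiag_pos {r : ZMod n} {x y : ℕ} (hxy : x < y) (hy : y < n)
    (h : IsDiag s(r + (x : ZMod n), r + (y : ZMod n))) : x + 2 ≤ y ∧ ¬ (x = 0 ∧ y = n - 1) := by
  have hn0 : (n : ZMod n) = 0 := ZMod.natCast_self n
  obtain ⟨a, b, hab, h1, h2, h3⟩ := h
  rw [Sym2.eq_iff] at hab
  have hadj : y ≠ x + 1 := by
    rintro rfl
    rcases hab with ⟨rfl, rfl⟩ | ⟨rfl, rfl⟩
    · exact h3 (by push_cast; ring)
    · exact h1 (by push_cast; ring)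
  refine ⟨by omega, ?_⟩
  rintro ⟨rfl, rfl⟩
  have e : ((n - 1 : ℕ) : ZMod n) = -1 := by rw [Nat.cast_sub (by omega), hn0]; simp
  rw [e] at hab
  rcases hab with ⟨rfl, rfl⟩ | ⟨rfl, rfl⟩
  · exact h1 (by simp [sub_eq_add_neg])
  · exact h3 (by simp)

lemma ear_injective (hn : 5 ≤ n) {k l : ZMod n} (h : ear k = ear l) : k = l := by
  unfold ear at h
  rw [Sym2.eq_iff] at h
  rcases h with ⟨h, _⟩ | ⟨h1, h2⟩
  · simpa using h
  · exfalso
    have h4 : ((4 : ℕ) : ZMod n) = ((0 : ℕ) : ZMod n) := by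
      push_cast
      linear_combination h2 - h1
    have := congrArg ZMod.val h4
    rw [ZMod.val_natCast_of_lt (by omega), ZMod.val_natCast_of_lt (by omega)] at this
    omega

/-- A triangulation contains the ear of a vertex other than `r`. -/
lemma exists_ear_mem (hn : 5 ≤ n) {τ : Finset (Sym2 (ZMod n))} (hτ : IsTriangulation τ)
    (r : ZMod n) : ∃ k, k ≠ r ∧ ear k ∈ τ := by
  classical
  obtain ⟨hcard, hdiag, hcross⟩ := hτ
  let F : ℕ × ℕ → Sym2 (ZMod n) := fun p => s(r + (p.1 : ZMod n), r + (p.2 : ZMod n))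
  let S : Finset (ℕ × ℕ) := (Finset.range n ×ˢ Finset.range n).filter
    fun p => p.1 < p.2 ∧ F p ∈ τ
  have hSmem : ∀ p, p ∈ S ↔ (p.1 < n ∧ p.2 < n) ∧ p.1 < p.2 ∧ F p ∈ τ := fun p => by
    simp only [S, Finset.mem_filter, Finset.mem_product, Finset.mem_range]
  have hle : τ.card ≤ S.card := by
    refine Finset.card_le_card_of_surjOn F fun d hd => ?_
    obtain ⟨a, b, rfl, -, hne, -⟩ := hdiag d hd
    obtain ⟨x, hx, rfl⟩ := exists_pos r a
    obtain ⟨y, hy, rfl⟩ := exists_pos r b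
    rcases lt_trichotomy x y with hxy | rfl | hxy
    · exact ⟨(x, y), (hSmem _).2 ⟨⟨hx, hy⟩, hxy, hd⟩, rfl⟩
    · exact absurd rfl hne
    · exact ⟨(y, x), (hSmem _).2 ⟨⟨hy, hx⟩, hxy, by rw [Sym2.eq_swap] at hd; exact hd⟩,
        Sym2.eq_swap⟩
  have hSd : ∀ p ∈ S, p.1 + 2 ≤ p.2 ∧ ¬ (p.1 = 0 ∧ p.2 = n - 1) := fun p hp => by
    obtain ⟨⟨_, h2⟩, hlt, hmem⟩ := (hSmem p).1 hp
    exact of_isDiag_pos hlt h2 (hdiag _ hmem)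
  have hnot : (0, n - 1) ∉ S := fun hp => (hSd _ hp).2 ⟨rfl, rfl⟩
  have key : ∃ x, (x, x + 2) ∈ insert (0, n - 1) S := by
    refine exists_ear_pair (N := n) (by omega) ?_ ?_ ?_
    · intro p hp
      rcases Finset.mem_insert.mp hp with rfl | h
      · simp only; omega
      · exact ⟨(hSd p h).1, ((hSmem p).1 h).1.2⟩
      -- the pair `(0, n - 1)` spans all positions, so nothing crosses it
    · rintro p hp q hq ⟨h1, h2, h3⟩
      rcases Finset.mem_insert.mp hp with rfl | hp'
      · rcases Finset.mem_insert.mp hq with rfl | hq'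
        · omega
        · have := ((hSmem q).1 hq').1.2
          simp only at h3
          omega
      · rcases Finset.mem_insert.mp hq with rfl | hq'
        · simp only at h1
          omega
        · exact hcross _ ((hSmem p).1 hp').2.2 _ ((hSmem q).1 hq').2.2
            (crosses_pos r h1 h2 h3 ((hSmem q).1 hq').1.2)
    · rw [Finset.card_insert_of_notMem hnot]
      omega
  obtain ⟨x, hx⟩ := key
  rcases Finset.mem_insert.mp hx with h | h
  · simp only [Prod.mk.injEq] at h
    omega
  · obtain ⟨⟨_, h2⟩, -, hmem⟩ := (hSmem _).1 h
    simp only at h2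
    refine ⟨r + ((x + 1 : ℕ) : ZMod n), fun e => ?_, ?_⟩
    · have := pos_inj (r := r) (x := x + 1) (y := 0) (by omega) (by omega) (by simpa using e)
      omega
    · have : ear (r + ((x + 1 : ℕ) : ZMod n)) = F (x, x + 2) := by
        simp only [ear, F]
        refine congrArg₂ (fun a b => s(a, b)) ?_ ?_ <;> · push_cast; ring
      rw [this]; exact hmem

/-! ### Two fans -/

/-- In positions relative to `i`, with `j` at position `J`: the diagonals joining `n - 1` to
`1, …, J - 1` and those joining `J - 1` to `J + 1, …, n - 2`. They all separate `i` from `j`;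
the index `t` runs over the endpoints other than the apex. -/
def fans (i : ZMod n) (J : ℕ) : Finset (Sym2 (ZMod n)) :=
  ((Finset.Icc 1 (n - 2)).erase J).image fun t =>
    s(i + ((if t < J then t else J - 1 : ℕ) : ZMod n),
      i + ((if t < J then n - 1 else t : ℕ) : ZMod n))

lemma exists_pos_of_mem_fans {i : ZMod n} {J : ℕ} (hJ : 2 ≤ J) (hJn : J + 2 ≤ n)
    {d : Sym2 (ZMod n)} (hd : d ∈ fans i J) :
    ∃ x y : ℕ, d = s(i + (x : ZMod n), i + (y : ZMod n)) ∧ 1 ≤ x ∧ x < J ∧ J < y ∧ y < n ∧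
      (y = n - 1 ∨ x = J - 1) := by
  obtain ⟨t, ht, rfl⟩ := Finset.mem_image.mp hd
  simp only [Finset.mem_erase, Finset.mem_Icc] at ht
  refine ⟨_, _, rfl, ?_⟩
  split_ifs <;> omega

lemma fans_isTriangulation (i : ZMod n) {J : ℕ} (hJ : 2 ≤ J) (hJn : J + 2 ≤ n) :
    IsTriangulation (fans i J) := by
  refine ⟨?_, fun d hd => ?_, fun d hd e he hc => ?_⟩
  · unfold fans
    rw [Finset.card_image_of_injOn, Finset.card_erase_of_mem (by simp; omega), Nat.card_Icc]
    · omega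
    · intro a ha b hb hab
      simp only [Finset.coe_erase, Finset.coe_Icc, Set.mem_sdiff, Set.mem_Icc,
        Set.mem_singleton_iff] at ha hb
      simp only [Sym2.eq_iff] at hab
      rcases hab with ⟨h1, h2⟩ | ⟨h1, h2⟩
      · have g1 := pos_inj (by split_ifs <;> omega) (by split_ifs <;> omega) h1
        have g2 := pos_inj (by split_ifs <;> omega) (by split_ifs <;> omega) h2
        split_ifs at g1 g2 <;> omega
      · have g1 := pos_inj (by split_ifs <;> omega) (by split_ifs <;> omega) h1
        have g2 := pos_inj (by split_ifs <;> omega) (by split_ifs <;> omega) h2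
        split_ifs at g1 g2 <;> omega
  · obtain ⟨x, y, rfl, h1, h2, h3, h4, -⟩ := exists_pos_of_mem_fans hJ hJn hd
    exact isDiag_pos i (by omega) h4 (by omega)
  · obtain ⟨x, y, rfl, h1, h2, h3, h4, h5⟩ := exists_pos_of_mem_fans hJ hJn hd
    obtain ⟨s, t, rfl, k1, k2, k3, k4, k5⟩ := exists_pos_of_mem_fans hJ hJn he
    have := of_crosses_pos (by omega) h4 (by omega) k4 hc
    omega

/-! ### Lengths -/

lemma norm_pt_sub (a b : ℝ) : ‖pt a - pt b‖ = 2 * |Real.sin ((a - b) / 2)| := by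
  have h : ‖pt a - pt b‖ ^ 2 = (2 * |Real.sin ((a - b) / 2)|) ^ 2 := by
    rw [EuclideanSpace.norm_sq_eq, mul_pow, sq_abs, Real.sin_sq_eq_half_sub]
    simp only [pt, Fin.sum_univ_two, Real.norm_eq_abs, sq_abs, WithLp.equiv_symm_apply,
      PiLp.sub_apply, Matrix.cons_val_zero, Matrix.cons_val_one]
    rw [show 2 * ((a - b) / 2) = a - b by ring, Real.cos_sub]
    nlinarith [Real.sin_sq_add_cos_sq a, Real.sin_sq_add_cos_sq b]
  exact (pow_left_inj₀ (norm_nonneg _) (by positivity) two_ne_zero).mp h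

/-- The angle of the vertex at position `k` relative to `i`, lifted to increase along positions. -/
noncomputable def lift (θ : ZMod n → ℝ) (i : ZMod n) (k : ℕ) : ℝ :=
  θ (i + (k : ZMod n)) + if (i + (k : ZMod n)).val < i.val then 2 * Real.pi else 0

lemma val_pos (i : ZMod n) {k : ℕ} (hk : k < n) :
    (i + (k : ZMod n)).val = if i.val + k < n then i.val + k else i.val + k - n := by
  have hi := ZMod.val_lt i
  rw [ZMod.val_add, ZMod.val_natCast_of_lt hk]
  split_ifs with h
  · exact Nat.mod_eq_of_lt h
  · rw [Nat.mod_eq_sub_mod (by omega), Nat.mod_eq_of_lt (by omega)]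

lemma lift_sub {θ : ZMod n → ℝ} (hmono : ∀ i j : ZMod n, i.val < j.val → θ i < θ j)
    (hlb : ∀ i : ZMod n, 0 ≤ θ i) (hub : ∀ i : ZMod n, θ i < 2 * Real.pi)
    (i : ZMod n) {x y : ℕ} (hxy : x < y) (hy : y < n) :
    lift θ i x < lift θ i y ∧ lift θ i y < lift θ i x + 2 * Real.pi := by
  have vx := val_pos i (k := x) (by omega)
  have vy := val_pos i hy
  have hi := ZMod.val_lt i
  have a1 := hlb (i + (x : ZMod n))
  have a2 := hub (i + (x : ZMod n))
  have b1 := hlb (i + (y : ZMod n))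
  have b2 := hub (i + (y : ZMod n))
  have m1 := hmono (i + (x : ZMod n)) (i + (y : ZMod n))
  have m2 := hmono (i + (y : ZMod n)) (i + (x : ZMod n))
  unfold lift
  by_cases c1 : i.val + x < n <;> by_cases c2 : i.val + y < n
  · rw [if_pos c1] at vx
    rw [if_pos c2] at vy
    have := m1 (by omega)
    rw [if_neg (by omega), if_neg (by omega)]
    constructor <;> linarith
  · rw [if_pos c1] at vx
    rw [if_neg c2] at vy
    have := m2 (by omega)
    rw [if_neg (by omega), if_pos (by omega)]
    constructor <;> linarith
  · omega
  · rw [if_neg c1] at vx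
    rw [if_neg c2] at vy
    have := m1 (by omega)
    rw [if_pos (by omega), if_pos (by omega)]
    constructor <;> linarith

lemma len_pos {θ : ZMod n → ℝ} (hmono : ∀ i j : ZMod n, i.val < j.val → θ i < θ j)
    (hlb : ∀ i : ZMod n, 0 ≤ θ i) (hub : ∀ i : ZMod n, θ i < 2 * Real.pi)
    {p : ZMod n → EuclideanSpace ℝ (Fin 2)} (hp : ∀ i : ZMod n, p i = pt (θ i))
    (i : ZMod n) {x y : ℕ} (hxy : x < y) (hy : y < n) :
    len p s(i + (x : ZMod n), i + (y : ZMod n)) =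
      2 * Real.sin ((lift θ i y - lift θ i x) / 2) := by
  have hpt : ∀ k : ℕ, p (i + (k : ZMod n)) = pt (lift θ i k) := fun k => by
    rw [hp, lift]
    split_ifs
    · simp [pt]
    · simp
  obtain ⟨h1, h2⟩ := lift_sub hmono hlb hub i hxy hy
  change ‖p _ - p _‖ = _
  rw [norm_sub_rev, hpt, hpt, norm_pt_sub, abs_of_nonneg]
  exact Real.sin_nonneg_of_nonneg_of_le_pi (by linarith) (by linarith)

/-- Crossing diagonals of equal length form a symmetric quadruple, once the four endpoints are
listed by residue. -/
lemma hasSymQuad_of_crosses {p : ZMod n → EuclideanSpace ℝ (Fin 2)} {d e : Sym2 (ZMod n)}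
    (h : Crosses d e) (hl : len p d = len p e) : HasSymQuad p := by
  obtain ⟨a, b, c, d, rfl, rfl, h1, h2⟩ := h
  replace hl : ‖p a - p b‖ = ‖p c - p d‖ := hl
  have hv : ∀ v : ZMod n, v = 0 + ((v.val : ℕ) : ZMod n) := fun v => by simp
  rw [hv a, hv b, hv c, ccwBtw_pos_iff 0 (ZMod.val_lt _) (ZMod.val_lt _) (ZMod.val_lt _)] at h1
  rw [hv a, hv b, hv d, ccwBtw_pos_iff 0 (ZMod.val_lt _) (ZMod.val_lt _) (ZMod.val_lt _)] at h2
  have : (a.val < c.val ∧ c.val < b.val ∧ b.val < d.val) ∨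
      (d.val < a.val ∧ a.val < c.val ∧ c.val < b.val) ∨
      (b.val < d.val ∧ d.val < a.val ∧ a.val < c.val) ∨
      (c.val < b.val ∧ b.val < d.val ∧ d.val < a.val) := by omega
  rcases this with ⟨q1, q2, q3⟩ | ⟨q1, q2, q3⟩ | ⟨q1, q2, q3⟩ | ⟨q1, q2, q3⟩
  · exact ⟨_, _, _, _, q1, q2, q3, hl⟩
  · exact ⟨_, _, _, _, q1, q2, q3, by rw [norm_sub_rev, hl]⟩
  · exact ⟨_, _, _, _, q1, q2, q3, by rw [norm_sub_rev, hl, norm_sub_rev]⟩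
  · exact ⟨_, _, _, _, q1, q2, q3, by rw [← hl, norm_sub_rev]⟩

/-- If two distinct arcs `B < A` in `(0, 2π)` subtend equal chords, then every arc between them
subtends a chord at least as long. -/
lemma sin_half_le {A B C : ℝ} (hB : 0 < B) (hBA : B < A) (hA : A < 2 * Real.pi)
    (h : Real.sin (A / 2) = Real.sin (B / 2)) (hBC : B ≤ C) (hCA : C ≤ A) :
    Real.sin (B / 2) ≤ Real.sin (C / 2) := by
  -- equality of the sines forces `A + B = 2π`
  have hsum : A + B = 2 * Real.pi := by
    have h0 := sub_eq_zero.mpr h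
    rw [Real.sin_sub_sin] at h0
    have hs : 0 < Real.sin ((A / 2 - B / 2) / 2) :=
      Real.sin_pos_of_pos_of_lt_pi (by linarith) (by linarith)
    have hc : Real.cos ((A / 2 + B / 2) / 2) = Real.cos (Real.pi / 2) := by
      rw [Real.cos_pi_div_two]
      rcases mul_eq_zero.mp h0 with h0 | h0
      · linarith
      · exact h0
    have := Real.injOn_cos ⟨by linarith, by linarith⟩
      ⟨by linarith [Real.pi_pos], by linarith [Real.pi_pos]⟩ hc
    linarith
  rw [← sub_nonneg, Real.sin_sub_sin]
  have hs : 0 ≤ Real.sin ((C / 2 - B / 2) / 2) :=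
    Real.sin_nonneg_of_nonneg_of_le_pi (by linarith) (by linarith)
  have hc : 0 ≤ Real.cos ((C / 2 + B / 2) / 2) :=
    Real.cos_nonneg_of_mem_Icc ⟨by linarith, by linarith⟩
  positivity

lemma forall_le_of_lexLE {l l' : List ℝ} (hl : l ≠ []) (h : lexLE l l')
    (hs : l'.Pairwise (· ≤ ·)) {M : ℝ} (hM : ∀ x ∈ l, M ≤ x) : ∀ x ∈ l', M ≤ x := by
  rcases h with rfl | h
  · exact hM
  · cases h with
    | nil => exact absurd rfl hl
    | cons h =>
      have ha := hM _ (List.mem_cons_self ..)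
      intro x hx
      rcases List.mem_cons.mp hx with rfl | hx
      · exact ha
      · exact ha.trans (List.rel_of_pairwise_cons hs hx)
    | rel h =>
      have ha := (hM _ (List.mem_cons_self ..)).trans h.le
      intro x hx
      rcases List.mem_cons.mp hx with rfl | hx
      · exact ha
      · exact ha.trans (List.rel_of_pairwise_cons hs hx)

lemma mem_sortedLengths {p : ZMod n → EuclideanSpace ℝ (Fin 2)} {τ : Finset (Sym2 (ZMod n))}
    {x : ℝ} : x ∈ sortedLengths p τ ↔ ∃ d ∈ τ, len p d = x := by
  simp [sortedLengths]

theorem stmt18 {n : ℕ} [NeZero n] (hn : 5 ≤ n)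
    (θ : ZMod n → ℝ)
    (hmono : ∀ i j : ZMod n, i.val < j.val → θ i < θ j)
    (hlb : ∀ i : ZMod n, 0 ≤ θ i) (hub : ∀ i : ZMod n, θ i < 2 * Real.pi)
    (p : ZMod n → EuclideanSpace ℝ (Fin 2)) (hp : ∀ i : ZMod n, p i = pt (θ i))
    (hsym : ¬ HasSymQuad p)
    (i j : ZMod n) (hij : ear i ≠ ear j)
    (heq : len p (ear i) = len p (ear j))
    (hmax : ∀ k : ZMod n, len p (ear k) ≤ len p (ear i))
    (honly : ∀ k : ZMod n, len p (ear k) = len p (ear i) →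
      ear k = ear i ∨ ear k = ear j) :
    ¬ Crosses (ear i) (ear j) ∧
      ∀ τ : Finset (Sym2 (ZMod n)), LengthMaximal p τ → ear i ∈ τ ∧ ear j ∈ τ := by
  have hnc : ¬ Crosses (ear i) (ear j) := fun h => hsym (hasSymQuad_of_crosses h heq)
  refine ⟨hnc, fun τ ⟨hτ, hbest⟩ => ?_⟩
  have hn0 : (n : ZMod n) = 0 := ZMod.natCast_self n
  obtain ⟨J, hJn, rfl⟩ := exists_pos i j
  have eari : ear i = s(i + ((1 : ℕ) : ZMod n), i + ((n - 1 : ℕ) : ZMod n)) := by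
    rw [Nat.cast_sub (by omega), hn0, Sym2.eq_swap, ear]
    refine congrArg₂ (fun a b => s(a, b)) ?_ ?_ <;> · push_cast; ring
  have hJ0 : J ≠ 0 := by
    rintro rfl
    simp at hij
  -- ears of neighbouring vertices cross
  have hJ1 : J ≠ 1 := by
    rintro rfl
    have : ear (i + ((1 : ℕ) : ZMod n)) = s(i + ((0 : ℕ) : ZMod n), i + ((2 : ℕ) : ZMod n)) := by
      unfold ear
      refine congrArg₂ (fun a b => s(a, b)) ?_ ?_ <;> · push_cast; ring
    have hc : Crosses (ear (i + ((1 : ℕ) : ZMod n))) (ear i) := by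
      rw [this, eari]
      exact crosses_pos i (by omega) (by omega) (by omega) (by omega)
    exact hsym (hasSymQuad_of_crosses hc heq.symm)
  have hJ2 : J ≠ n - 1 := by
    rintro rfl
    have : ear (i + ((n - 1 : ℕ) : ZMod n)) =
        s(i + ((0 : ℕ) : ZMod n), i + ((n - 2 : ℕ) : ZMod n)) := by
      rw [Nat.cast_sub (by omega), Nat.cast_sub (by omega), hn0, Sym2.eq_swap, ear]
      refine congrArg₂ (fun a b => s(a, b)) ?_ ?_ <;> · push_cast; ring
    have hc : Crosses (ear (i + ((n - 1 : ℕ) : ZMod n))) (ear i) := by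
      rw [this, eari]
      exact crosses_pos i (by omega) (by omega) (by omega) (by omega)
    exact hsym (hasSymQuad_of_crosses hc heq.symm)
  have earj : ear (i + (J : ZMod n)) =
      s(i + ((J - 1 : ℕ) : ZMod n), i + ((J + 1 : ℕ) : ZMod n)) := by
    rw [Nat.cast_sub (by omega), ear]
    refine congrArg₂ (fun a b => s(a, b)) ?_ ?_ <;> · push_cast; ring
  have leni := (congrArg (len p) eari).trans
    (len_pos hmono hlb hub hp i (x := 1) (y := n - 1) (by omega) (by omega))
  have lenj := (congrArg (len p) earj).trans
    (len_pos hmono hlb hub hp i (x := J - 1) (y := J + 1) (by omega) (by omega))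
  have hL := fun {x y : ℕ} (h : x < y) (h' : y < n) => lift_sub hmono hlb hub i h h'
  have hLe : ∀ {x y : ℕ}, x ≤ y → y < n → lift θ i x ≤ lift θ i y := fun {x y} h h' => by
    rcases h.lt_or_eq with h | rfl
    · exact (hL h h').1.le
    · exact le_rfl
  have hfan : ∀ d ∈ fans i J, len p (ear i) ≤ len p d := by
    intro d hd
    obtain ⟨x, y, rfl, h1, h2, h3, h4, -⟩ := exists_pos_of_mem_fans (by omega) (by omega) hd
    rw [len_pos hmono hlb hub hp i (by omega) h4, heq, lenj]
    have b1 := (hL (x := J - 1) (y := J + 1) (by omega) (by omega)).1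
    have a2 := (hL (x := 1) (y := n - 1) (by omega) (by omega)).2
    have c1 := hLe (x := x) (y := J - 1) (by omega) (by omega)
    have c2 := hLe (x := J + 1) (y := y) (by omega) (by omega)
    have c3 := hLe (x := 1) (y := x) (by omega) (by omega)
    have c4 := hLe (x := y) (y := n - 1) (by omega) (by omega)
    have d1 := hLe (x := 1) (y := J - 1) (by omega) (by omega)
    have d2 := hLe (x := J + 1) (y := n - 1) (by omega) (by omega)
    -- the ear at `i` and the ear at `j` do not coincide, as `n ≥ 5`
    have hBA : lift θ i (J + 1) - lift θ i (J - 1) < lift θ i (n - 1) - lift θ i 1 := by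
      by_cases hJ3 : J = 2
      · have := (hL (x := J + 1) (y := n - 1) (by omega) (by omega)).1
        linarith
      · have := (hL (x := 1) (y := J - 1) (by omega) (by omega)).1
        linarith
    have := sin_half_le (A := lift θ i (n - 1) - lift θ i 1)
      (B := lift θ i (J + 1) - lift θ i (J - 1)) (C := lift θ i y - lift θ i x)
      (by linarith) hBA (by linarith) (by linarith) (by linarith) (by linarith)
    linarith
  have htri := fans_isTriangulation i (J := J) (by omega) (by omega)
  have hlow : ∀ d ∈ τ, len p (ear i) ≤ len p d := by
    intro d hd
    refine forall_le_of_lexLE ?_ (hbest _ htri) ?_ (M := len p (ear i)) ?_ _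
      (mem_sortedLengths.mpr ⟨d, hd, rfl⟩)
    · intro h0
      have hc : (fans i J).Nonempty := Finset.card_pos.mp (by rw [htri.1]; omega)
      obtain ⟨d, hd⟩ := hc
      have := mem_sortedLengths (p := p).mpr ⟨d, hd, rfl⟩
      simp [h0] at this
    · exact Multiset.pairwise_sort _ _
    · intro x hx
      obtain ⟨d, hd, rfl⟩ := mem_sortedLengths.mp hx
      exact hfan d hd
  constructor
  · obtain ⟨k, hk, hmem⟩ := exists_ear_mem hn hτ (i + (J : ZMod n))
    rcases honly k (le_antisymm (hmax k) (hlow _ hmem)) with h | h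
    · exact h ▸ hmem
    · exact absurd (ear_injective hn h) hk
  · obtain ⟨k, hk, hmem⟩ := exists_ear_mem hn hτ i
    rcases honly k (le_antisymm (hmax k) (hlow _ hmem)) with h | h
    · exact absurd (ear_injective hn h) hk
    · exact h ▸ hmem
end
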